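/- There is a k-algebra isomorphism from the quotient of the free associative algebra k⟨E₁, E₂⟩ by the two-sided ideal generated by the elements R₅ = [E₁,[E₁,[E₁,E₂]]] + 6[E₂,[E₂,E₁]] and R₇ = [E₁,[E₁,[E₁,[E₁,[E₁,E₂]]]]] + 40[E₂,[E₂,[E₂,E₁]]] onto U(W₊), sending E₁ to e₁ and E₂ to e₂ (here [a,b] = ab − ba denotes the ring commutator). -/

import Mathlib

set_option maxHeartbeats 1000000

/-!
Statement 2: There is a k-algebra isomorphism from the quotient of the free associative
algebra k⟨E₁,E₂⟩ by the two-sided ideal generated by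
R₅ = [E₁,[E₁,[E₁,E₂]]] + 6[E₂,[E₂,E₁]] and
R₇ = [E₁,[E₁,[E₁,[E₁,[E₁,E₂]]]]] + 40[E₂,[E₂,[E₂,E₁]]]
onto U(W₊), sending E₁ to e₁ and E₂ to e₂.

The quotient by the two-sided ideal generated by R₅ and R₇ is realized as the `RingQuot`
of the relation identifying R₅ and R₇ with 0.
-/

noncomputable section

open Polynomial

/-- The derivation `e n = x^(n+1) d/dx` of `k[x]`. -/
def wittGen (k : Type*) [Field k] (n : ℕ) : Derivation k k[X] k[X] :=
  (X : k[X]) ^ (n + 1) • Polynomial.derivative'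

/-- The positive Witt algebra `W₊`. -/
def positiveWitt (k : Type*) [Field k] : LieSubalgebra k (Derivation k k[X] k[X]) :=
  LieSubalgebra.lieSpan k _ {d | ∃ n : ℕ, 1 ≤ n ∧ d = wittGen k n}

/-- `e n` as an element of `W₊` (for `1 ≤ n`). -/
def wittElt (k : Type*) [Field k] (n : ℕ) (hn : 1 ≤ n) : positiveWitt k :=
  ⟨wittGen k n, LieSubalgebra.subset_lieSpan ⟨n, hn, rfl⟩⟩

/-- The ring commutator [a, b] = ab - ba. -/
def cm {A : Type*} [Ring A] (a b : A) : A := a * b - b * a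

/-- The generator E₁ of the free algebra on two generators. -/
def E₁ (k : Type*) [Field k] : FreeAlgebra k (Fin 2) := FreeAlgebra.ι k 0

/-- The generator E₂ of the free algebra on two generators. -/
def E₂ (k : Type*) [Field k] : FreeAlgebra k (Fin 2) := FreeAlgebra.ι k 1

/-- The degree 5 relation R₅. -/
def R₅ (k : Type*) [Field k] : FreeAlgebra k (Fin 2) :=
  cm (E₁ k) (cm (E₁ k) (cm (E₁ k) (E₂ k))) + 6 * cm (E₂ k) (cm (E₂ k) (E₁ k))

/-- The degree 7 relation R₇. -/
def R₇ (k : Type*) [Field k] : FreeAlgebra k (Fin 2) :=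
  cm (E₁ k) (cm (E₁ k) (cm (E₁ k) (cm (E₁ k) (cm (E₁ k) (E₂ k))))) +
    40 * cm (E₂ k) (cm (E₂ k) (cm (E₂ k) (E₁ k)))

/-- The relation setting R₅ and R₇ to zero; `RingQuot` of this relation is the quotient of
the free algebra by the two-sided ideal generated by R₅ and R₇. -/
def wittRel (k : Type*) [Field k] : FreeAlgebra k (Fin 2) → FreeAlgebra k (Fin 2) → Prop :=
  fun a b => (a = R₅ k ∧ b = 0) ∨ (a = R₇ k ∧ b = 0)

section LieRelations

variable {k L : Type*} [Field k] [LieRing L] [LieAlgebra k L]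

theorem lieSpan_toSubmodule_eq_span {s : Set L}
    (h : ∀ x ∈ s, ∀ y ∈ s, ⁅x, y⁆ ∈ Submodule.span k s) :
    (LieSubalgebra.lieSpan k L s).toSubmodule = Submodule.span k s := by
  let S : LieSubalgebra k L :=
    { Submodule.span k s with
      lie_mem' := by
        intro x y hx hy
        change x ∈ Submodule.span k _ at hx
        change y ∈ Submodule.span k _ at hy
        change ⁅x, y⁆ ∈ Submodule.span k _
        induction hx, hy using Submodule.span_induction₂ with
        | mem_mem x y hx hy => exact h x hx y hy
        | zero_left y hy => simp
        | zero_right x hx => simp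
        | add_left x y z _ _ _ h₁ h₂ => rw [add_lie]; exact add_mem h₁ h₂
        | add_right x y z _ _ _ h₁ h₂ => rw [lie_add]; exact add_mem h₁ h₂
        | smul_left r x y _ _ h => rw [smul_lie]; exact Submodule.smul_mem _ _ h
        | smul_right r x y _ _ h => rw [lie_smul]; exact Submodule.smul_mem _ _ h }
  refine le_antisymm ?_ LieSubalgebra.submodule_span_le_lieSpan
  exact (LieSubalgebra.lieSpan_le (K := S)).mpr fun _ h => Submodule.subset_span h

/-- In a Lie algebra over a field of characteristic zero, the relations
`⁅a 1, a n⁆ = (n - 1) a (n + 1)` together with `⁅a 2, a 3⁆ = a 5` and `⁅a 2, a 5⁆ = 3 a 7` imply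
all the relations of the positive Witt algebra. -/
theorem lie_eq_of_wittRelations [CharZero k] (a : ℕ → L)
    (h1 : ∀ n : ℕ, 1 ≤ n → ⁅a 1, a n⁆ = ((n : k) - 1) • a (n + 1))
    (h5 : ⁅a 2, a 3⁆ = a 5) (h7 : ⁅a 2, a 5⁆ = (3 : k) • a 7) :
    ∀ i j : ℕ, 1 ≤ i → 1 ≤ j → ⁅a i, a j⁆ = ((j : k) - i) • a (i + j) := by
  suffices H : ∀ n i j : ℕ, i + j = n → 1 ≤ i → 1 ≤ j →
      ⁅a i, a j⁆ = ((j : k) - i) • a (i + j) from fun i j => H _ i j rfl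
  intro n
  induction n using Nat.strong_induction_on with
  | _ n ih =>
  -- the defect of the relation for `⁅a i, a j⁆`
  let c : ℕ → ℕ → L := fun i j => ⁅a i, a j⁆ - ((j : k) - i) • a (i + j)
  have hc : ∀ i j, ⁅a i, a j⁆ = c i j + ((j : k) - i) • a (i + j) := fun i j => by simp [c]
  have skew : ∀ i j, c i j = - c j i := by
    intro i j
    simp only [c]
    rw [← lie_skew, add_comm j i]
    module
  have c1 : ∀ j, 1 ≤ j → c 1 j = 0 := by
    intro j hj
    simp only [c]
    rw [h1 j hj, add_comm 1 j, Nat.cast_one, sub_self]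
  have adOne : ∀ i j, 1 ≤ i → 1 ≤ j → i + j + 1 = n →
      ((i : k) - 1) • c (i + 1) j + ((j : k) - 1) • c i (j + 1) = 0 := by
    intro i j hi hj hn
    have e := leibniz_lie (a 1) (a i) (a j)
    rw [ih (i + j) (by omega) i j rfl hi hj, h1 i hi, h1 j hj, lie_smul, smul_lie, lie_smul,
      h1 _ (by omega), hc (i + 1) j, hc i (j + 1), show i + 1 + j = i + j + 1 by omega,
      show i + (j + 1) = i + j + 1 by omega] at e
    push_cast at e
    linear_combination (norm := module) -e
  have adTwo : ∀ i j, 1 ≤ i → 1 ≤ j → i + j + 2 = n →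
      ((j : k) - i) • c 2 (i + j) = ((i : k) - 2) • c (i + 2) j + ((j : k) - 2) • c i (j + 2) := by
    intro i j hi hj hn
    have e := leibniz_lie (a 2) (a i) (a j)
    rw [ih (i + j) (by omega) i j rfl hi hj, ih (2 + i) (by omega) 2 i rfl (by omega) hi,
      ih (2 + j) (by omega) 2 j rfl (by omega) hj, lie_smul, smul_lie, lie_smul,
      add_comm 2 i, add_comm 2 j, hc 2 (i + j), hc (i + 2) j, hc i (j + 2),
      show i + 2 + j = i + j + 2 by omega, show i + (j + 2) = i + j + 2 by omega,
      show 2 + (i + j) = i + j + 2 by omega] at e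
    push_cast at e
    linear_combination (norm := module) e
  -- all defects in degree `n` are multiples of the one of `⁅a 2, a (n - 2)⁆`
  have reduce : (∀ j, j + 2 = n → 1 ≤ j → c 2 j = 0) →
      ∀ i j, 1 ≤ i → 1 ≤ j → i + j = n → c i j = 0 := by
    intro h2 i
    induction i with
    | zero => intro j hi; omega
    | succ i IH =>
      intro j _ hj hn
      rcases Nat.lt_or_ge i 2 with h | h
      · interval_cases i
        · exact c1 j hj
        · exact h2 j (by omega) hj
      · have e := adOne i j (by omega) hj (by omega)
        rw [IH (j + 1) (by omega) (by omega) (by omega), smul_zero, add_zero] at e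
        refine (smul_eq_zero.mp e).resolve_left ?_
        rw [sub_eq_zero]
        exact_mod_cast (by omega : i ≠ 1)
  -- in even degree, descend from the middle, where the defect vanishes by skew-symmetry
  have descend : ∀ d i j, 2 ≤ i → j = i + 2 * d → i + j = n → c i j = 0 := by
    intro d
    induction d with
    | zero =>
      intro i j _ hj _
      obtain rfl : j = i := by omega
      simp [c]
    | succ d IH =>
      intro i j hi hj hn
      obtain ⟨j, rfl⟩ : ∃ j', j = j' + 1 := ⟨j - 1, by omega⟩
      have e := adOne i j (by omega) (by omega) (by omega)
      rw [IH (i + 1) j (by omega) (by omega) (by omega), smul_zero, zero_add] at e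
      refine (smul_eq_zero.mp e).resolve_left ?_
      rw [sub_eq_zero]
      exact_mod_cast (by omega : j ≠ 1)
  have c2 : ∀ j, j + 2 = n → 1 ≤ j → c 2 j = 0 := by
    intro j hjn hj
    rcases Nat.even_or_odd' j with ⟨m, rfl | rfl⟩
    · exact descend (m - 1) 2 _ le_rfl (by omega) (by omega)
    · match m with
      | 0 => rw [skew, c1 2 (by omega), neg_zero]
      | 1 =>
        simp only [c, h5]
        norm_num
      | 2 =>
        simp only [c, h7]
        norm_num
      | p + 3 =>
        have e2 := adOne 2 (2 * p + 6) (by omega) (by omega) (by omega)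
        have e3 := adOne 3 (2 * p + 5) (by omega) (by omega) (by omega)
        have e4 := adOne 4 (2 * p + 4) (by omega) (by omega) (by omega)
        have f := adTwo 3 (2 * p + 4) (by omega) (by omega) (by omega)
        have hz : ((6 * (2 * p + 1) + (2 * p + 3) * (2 * p + 4) * (2 * p + 5) +
            6 * (2 * p + 2) * (2 * p + 5) : ℕ) : k) • c 2 (2 * p + 7) = 0 := by
          simp only [show 3 + (2 * p + 4) = 2 * p + 7 by omega] at f
          push_cast at e2 e3 e4 f ⊢
          linear_combination (norm := module) (6 : k) • f + (2 : k) • e4 - (2 * p + 3 : k) • e3 +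
            ((2 * p + 3) * (2 * p + 4) + 6 * (2 * p + 2) : k) • e2
        refine (smul_eq_zero.mp hz).resolve_left ?_
        rw [Nat.cast_eq_zero]
        omega
  intro i j hn hi hj
  exact sub_eq_zero.mp (reduce c2 i j hi hj hn)

theorem lie_degree_five_relation (e : ∀ n : ℕ, 1 ≤ n → L)
    (he : ∀ i j hi hj, ⁅e i hi, e j hj⁆ = ((j : k) - i) • e (i + j) (by omega)) :
    ⁅e 1 le_rfl, ⁅e 1 le_rfl, ⁅e 1 le_rfl, e 2 one_le_two⁆⁆⁆ +
      (6 : k) • ⁅e 2 one_le_two, ⁅e 2 one_le_two, e 1 le_rfl⁆⁆ = 0 := by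
  simp only [he, lie_smul, smul_smul, Nat.reduceAdd]
  rw [← add_smul]
  norm_num

theorem lie_degree_seven_relation (e : ∀ n : ℕ, 1 ≤ n → L)
    (he : ∀ i j hi hj, ⁅e i hi, e j hj⁆ = ((j : k) - i) • e (i + j) (by omega)) :
    ⁅e 1 le_rfl, ⁅e 1 le_rfl, ⁅e 1 le_rfl, ⁅e 1 le_rfl, ⁅e 1 le_rfl, e 2 one_le_two⁆⁆⁆⁆⁆ +
      (40 : k) • ⁅e 2 one_le_two, ⁅e 2 one_le_two, ⁅e 2 one_le_two, e 1 le_rfl⁆⁆⁆ = 0 := by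
  simp only [he, lie_smul, smul_smul, Nat.reduceAdd]
  rw [← add_smul]
  norm_num

end LieRelations

section Witt

variable (k : Type*) [Field k]

theorem wittGen_apply_X (n : ℕ) : wittGen k n X = X ^ (n + 1) := by
  simp [wittGen]

theorem lie_wittGen (i j : ℕ) :
    ⁅wittGen k i, wittGen k j⁆ = ((j : k) - i) • wittGen k (i + j) := by
  refine Polynomial.derivation_ext ?_
  rw [Derivation.commutator_apply, Derivation.smul_apply, wittGen_apply_X, wittGen_apply_X,
    wittGen_apply_X, Derivation.leibniz_pow, Derivation.leibniz_pow, wittGen_apply_X,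
    wittGen_apply_X]
  simp only [add_tsub_cancel_right, smul_eq_mul, nsmul_eq_mul, Polynomial.smul_eq_C_mul, map_sub,
    map_natCast]
  push_cast
  ring

theorem lie_wittElt (i j : ℕ) (hi : 1 ≤ i) (hj : 1 ≤ j) :
    ⁅wittElt k i hi, wittElt k j hj⁆ = ((j : k) - i) • wittElt k (i + j) (by omega) :=
  Subtype.ext (lie_wittGen k i j)

theorem positiveWitt_toSubmodule :
    (positiveWitt k).toSubmodule = Submodule.span k {d | ∃ n : ℕ, 1 ≤ n ∧ d = wittGen k n} := by
  refine lieSpan_toSubmodule_eq_span ?_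
  rintro _ ⟨i, hi, rfl⟩ _ ⟨j, hj, rfl⟩
  have h := Submodule.smul_mem (Submodule.span k {d | ∃ n : ℕ, 1 ≤ n ∧ d = wittGen k n})
    ((j : k) - i) (Submodule.subset_span ⟨i + j, by omega, rfl⟩)
  rwa [← lie_wittGen] at h

/-- Induction principle: `W₊` is spanned by the elements `e n`. -/
theorem positiveWitt_induction {p : positiveWitt k → Prop}
    (elt : ∀ n hn, p (wittElt k n hn)) (zero : p 0) (add : ∀ x y, p x → p y → p (x + y))
    (smul : ∀ (r : k) x, p x → p (r • x)) (x : positiveWitt k) : p x := by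
  obtain ⟨x, hx⟩ := x
  have hx' : x ∈ Submodule.span k {d | ∃ n : ℕ, 1 ≤ n ∧ d = wittGen k n} := by
    rw [← positiveWitt_toSubmodule]; exact hx
  suffices H : ∃ h : x ∈ positiveWitt k, p ⟨x, h⟩ from H.2
  clear hx
  induction hx' using Submodule.span_induction with
  | mem x h =>
    obtain ⟨n, hn, rfl⟩ := h
    exact ⟨_, elt n hn⟩
  | zero => exact ⟨zero_mem _, zero⟩
  | add x y _ _ h₁ h₂ => exact ⟨add_mem h₁.1 h₂.1, add _ _ h₁.2 h₂.2⟩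
  | smul r x _ h => exact ⟨(positiveWitt k).smul_mem r h.1, smul r _ h.2⟩

variable {k} {L : Type*} [LieRing L] [LieAlgebra k L]

/-- The linear map `W₊ → L` sending `e n` to `a n`. -/
def positiveWittLinear (a : ℕ → L) : positiveWitt k →ₗ[k] L where
  toFun d := (Polynomial.basisMonomials k).constr k (fun m => a (m - 1)) (d.1 X)
  map_add' x y := by simp
  map_smul' r x := by simp

theorem positiveWittLinear_wittElt (a : ℕ → L) (n : ℕ) (hn : 1 ≤ n) :
    positiveWittLinear a (wittElt k n hn) = a n := by
  change (Polynomial.basisMonomials k).constr k (fun m => a (m - 1)) (wittGen k n X) = a n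
  rw [wittGen_apply_X, Polynomial.X_pow_eq_monomial]
  have h := (Polynomial.basisMonomials k).constr_basis k (fun m => a (m - 1)) (n + 1)
  rwa [Polynomial.coe_basisMonomials] at h

/-- The Lie algebra homomorphism `W₊ → L` determined by a family satisfying the relations of
`W₊`. -/
def positiveWittLift (a : ℕ → L)
    (ha : ∀ i j : ℕ, 1 ≤ i → 1 ≤ j → ⁅a i, a j⁆ = ((j : k) - i) • a (i + j)) :
    positiveWitt k →ₗ⁅k⁆ L where
  toLinearMap := positiveWittLinear a
  map_lie' := by
    intro x y
    change positiveWittLinear a ⁅x, y⁆ = ⁅positiveWittLinear a x, positiveWittLinear a y⁆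
    induction x using positiveWitt_induction with
    | zero => simp
    | add x₁ x₂ h₁ h₂ => rw [add_lie, map_add, map_add, add_lie, h₁, h₂]
    | smul r x h => rw [smul_lie, map_smul, map_smul, smul_lie, h]
    | elt i hi =>
      induction y using positiveWitt_induction with
      | zero => simp
      | add y₁ y₂ h₁ h₂ => rw [lie_add, map_add, map_add, lie_add, h₁, h₂]
      | smul r y h => rw [lie_smul, map_smul, map_smul, lie_smul, h]
      | elt j hj =>
        rw [lie_wittElt, map_smul]
        simp only [positiveWittLinear_wittElt, ha i j hi hj]

theorem positiveWittLift_wittElt (a : ℕ → L)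
    (ha : ∀ i j : ℕ, 1 ≤ i → 1 ≤ j → ⁅a i, a j⁆ = ((j : k) - i) • a (i + j))
    (n : ℕ) (hn : 1 ≤ n) : positiveWittLift a ha (wittElt k n hn) = a n :=
  positiveWittLinear_wittElt a n hn

variable (k) in
/-- The sequence starting with `x, y` at the indices `1, 2` and satisfying
`⁅x, a n⁆ = (n - 1) a (n + 1)`. -/
def wittSeq (x y : L) : ℕ → L
  | 0 => 0
  | 1 => x
  | 2 => y
  | n + 3 => ((n : k) + 1)⁻¹ • ⁅x, wittSeq x y (n + 2)⁆

theorem lie_wittSeq [CharZero k] (x y : L) (n : ℕ) (hn : 1 ≤ n) :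
    ⁅wittSeq k x y 1, wittSeq k x y n⁆ = ((n : k) - 1) • wittSeq k x y (n + 1) := by
  match n with
  | 1 => simp
  | n + 2 =>
    have h : (n : k) + 1 ≠ 0 := by exact_mod_cast n.succ_ne_zero
    rw [wittSeq, wittSeq, smul_smul, show ((n + 2 : ℕ) : k) - 1 = n + 1 by push_cast; ring,
      mul_inv_cancel₀ h, one_smul]

theorem lie_wittSeq_two_three [CharZero k] {x y : L}
    (h : ⁅x, ⁅x, ⁅x, y⁆⁆⁆ + (6 : k) • ⁅y, ⁅y, x⁆⁆ = 0) :
    ⁅wittSeq k x y 2, wittSeq k x y 3⁆ = wittSeq k x y 5 := by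
  have h' : (6 : k) • ⁅y, ⁅x, y⁆⁆ = ⁅x, ⁅x, ⁅x, y⁆⁆⁆ := by
    rw [← lie_skew y x, lie_neg] at h
    linear_combination (norm := module) -h
  simp only [wittSeq, lie_smul, smul_smul, ← h']
  norm_num

theorem lie_wittSeq_two_five [CharZero k] {x y : L}
    (h : ⁅x, ⁅x, ⁅x, y⁆⁆⁆ + (6 : k) • ⁅y, ⁅y, x⁆⁆ = 0)
    (h' : ⁅x, ⁅x, ⁅x, ⁅x, ⁅x, y⁆⁆⁆⁆⁆ + (40 : k) • ⁅y, ⁅y, ⁅y, x⁆⁆⁆ = 0) :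
    ⁅wittSeq k x y 2, wittSeq k x y 5⁆ = (3 : k) • wittSeq k x y 7 := by
  have e : ⁅x, ⁅x, ⁅x, ⁅x, ⁅x, y⁆⁆⁆⁆⁆ = (40 : k) • ⁅y, ⁅y, ⁅x, y⁆⁆⁆ := by
    rw [← lie_skew y x] at h'
    simp only [lie_neg] at h'
    linear_combination (norm := module) h'
  rw [← lie_wittSeq_two_three h]
  simp only [wittSeq, lie_smul, smul_smul, e]
  norm_num

end Witt

attribute [local instance] LieRing.ofAssociativeRing

theorem presentation_of_enveloping_positiveWitt (k : Type*) [Field k] [CharZero k] :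
    ∃ ψ : RingQuot (wittRel k) ≃ₐ[k] UniversalEnvelopingAlgebra k (positiveWitt k),
      ψ (RingQuot.mkAlgHom k (wittRel k) (E₁ k)) =
          UniversalEnvelopingAlgebra.ι k (wittElt k 1 le_rfl) ∧
        ψ (RingQuot.mkAlgHom k (wittRel k) (E₂ k)) =
          UniversalEnvelopingAlgebra.ι k (wittElt k 2 one_le_two) := by
  let A := RingQuot (wittRel k)
  let U := UniversalEnvelopingAlgebra k (positiveWitt k)
  let π : FreeAlgebra k (Fin 2) →ₐ[k] A := RingQuot.mkAlgHom k (wittRel k)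
  let x : A := π (E₁ k)
  let y : A := π (E₂ k)
  have r5 : ⁅x, ⁅x, ⁅x, y⁆⁆⁆ + (6 : k) • ⁅y, ⁅y, x⁆⁆ = 0 := by
    have h : π (R₅ k) = π 0 := RingQuot.mkAlgHom_rel k (Or.inl ⟨rfl, rfl⟩)
    simpa only [R₅, cm, map_add, map_mul, map_sub, map_ofNat, map_zero, Ring.lie_def,
      Algebra.smul_def] using h
  have r7 : ⁅x, ⁅x, ⁅x, ⁅x, ⁅x, y⁆⁆⁆⁆⁆ + (40 : k) • ⁅y, ⁅y, ⁅y, x⁆⁆⁆ = 0 := by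
    have h : π (R₇ k) = π 0 := RingQuot.mkAlgHom_rel k (Or.inr ⟨rfl, rfl⟩)
    simpa only [R₇, cm, map_add, map_mul, map_sub, map_ofNat, map_zero, Ring.lie_def,
      Algebra.smul_def] using h
  let e : ∀ n, 1 ≤ n → U := fun n hn => UniversalEnvelopingAlgebra.ι k (wittElt k n hn)
  have lie_e : ∀ i j hi hj, ⁅e i hi, e j hj⁆ = ((j : k) - i) • e (i + j) (by omega) := by
    intro i j hi hj
    simp only [e]
    rw [← LieHom.map_lie, lie_wittElt, map_smul]
  let f : FreeAlgebra k (Fin 2) →ₐ[k] U :=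
    FreeAlgebra.lift k ![e 1 le_rfl, e 2 one_le_two]
  have f1 : f (E₁ k) = e 1 le_rfl := by simp [f, E₁]
  have f2 : f (E₂ k) = e 2 one_le_two := by simp [f, E₂]
  have f5 : f (R₅ k) = 0 := by
    have h : f (R₅ k) = ⁅f (E₁ k), ⁅f (E₁ k), ⁅f (E₁ k), f (E₂ k)⁆⁆⁆ +
        (6 : k) • ⁅f (E₂ k), ⁅f (E₂ k), f (E₁ k)⁆⁆ := by
      simp only [R₅, cm, map_add, map_mul, map_sub, map_ofNat, Ring.lie_def, Algebra.smul_def]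
    rw [h, f1, f2]
    exact lie_degree_five_relation e lie_e
  have f7 : f (R₇ k) = 0 := by
    have h : f (R₇ k) = ⁅f (E₁ k), ⁅f (E₁ k), ⁅f (E₁ k), ⁅f (E₁ k), ⁅f (E₁ k), f (E₂ k)⁆⁆⁆⁆⁆ +
        (40 : k) • ⁅f (E₂ k), ⁅f (E₂ k), ⁅f (E₂ k), f (E₁ k)⁆⁆⁆ := by
      simp only [R₇, cm, map_add, map_mul, map_sub, map_ofNat, Ring.lie_def, Algebra.smul_def]
    rw [h, f1, f2]
    exact lie_degree_seven_relation e lie_e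
  let φ : A →ₐ[k] U := RingQuot.liftAlgHom k ⟨f, by
    rintro a b (⟨rfl, rfl⟩ | ⟨rfl, rfl⟩)
    · rw [f5, map_zero]
    · rw [f7, map_zero]⟩
  have φπ : ∀ z, φ (π z) = f z := fun z => RingQuot.liftAlgHom_mkAlgHom_apply _ _ _ _
  let g : positiveWitt k →ₗ⁅k⁆ A := positiveWittLift (wittSeq k x y)
    (lie_eq_of_wittRelations _ (lie_wittSeq x y) (lie_wittSeq_two_three r5)
      (lie_wittSeq_two_five r5 r7))
  let θ : U →ₐ[k] A := UniversalEnvelopingAlgebra.lift k g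
  have θe : ∀ n hn, θ (e n hn) = wittSeq k x y n := by
    intro n hn
    exact (UniversalEnvelopingAlgebra.lift_ι_apply k g _).trans (positiveWittLift_wittElt _ _ n hn)
  have φseq : ∀ n hn, φ (wittSeq k x y n) = e n hn := by
    intro n hn
    induction n, hn using Nat.le_induction with
    | base => exact (φπ _).trans f1
    | succ n hn IH =>
      match n, hn with
      | 1, _ => exact (φπ _).trans f2
      | n + 2, hn =>
        have h : (n : k) + 1 ≠ 0 := by exact_mod_cast n.succ_ne_zero
        rw [wittSeq, map_smul, Ring.lie_def, map_sub, map_mul, map_mul, IH,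
          show φ x = e 1 le_rfl from (φπ _).trans f1, ← Ring.lie_def, lie_e, smul_smul]
        simp only [add_comm 1 (n + 2)]
        rw [show ((n + 2 : ℕ) : k) - (1 : ℕ) = n + 1 by push_cast; ring, inv_mul_cancel₀ h,
          one_smul]
  have φθ : φ.comp θ = AlgHom.id k U := by
    refine UniversalEnvelopingAlgebra.hom_ext k (LieHom.ext fun z => ?_)
    change φ (θ (UniversalEnvelopingAlgebra.ι k z)) = UniversalEnvelopingAlgebra.ι k z
    induction z using positiveWitt_induction with
    | zero => simp
    | add z w h₁ h₂ => simp only [map_add, h₁, h₂]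
    | smul r z h => simp only [map_smul, h]
    | elt n hn => exact (congrArg φ (θe n hn)).trans (φseq n hn)
  have θφ : θ.comp φ = AlgHom.id k A := by
    refine RingQuot.ringQuot_ext' k _ _ (FreeAlgebra.hom_ext (funext fun i => ?_))
    fin_cases i
    · change θ (φ (π (E₁ k))) = x
      rw [φπ, f1, θe, wittSeq]
    · change θ (φ (π (E₂ k))) = y
      rw [φπ, f2, θe, wittSeq]
  exact ⟨AlgEquiv.ofAlgHom φ θ φθ θφ, (φπ _).trans f1, (φπ _).trans f2⟩

end
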